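/- Let n be a positive integer and L > 0, and let f : ℝⁿ → ℝ be a differentiable function in F_{−L,L}(ℝⁿ), bounded below with f⋆ := inf f finite. Suppose f satisfies the Polyak–Łojasiewicz inequality with modulus η, 0 < η ≤ L, on the sublevel set {x : f(x) ≤ f(x¹)}. Set κ := η/L and α⋆ := (1 − κ)/(2 + κ). Then the point x² := x¹ − ((1 + α⋆)/L)∇f(x¹) satisfies f(x²) − f⋆ ≤ ((4 − κ³ − 3κ)/(2 + κ)²)·(f(x¹) − f⋆). -/

import Mathlib

/-- `f` belongs to the class `F_{μ,L}(ℝⁿ)`: minimum curvature `μ`, maximum curvature `L`. -/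
def MemFClass {n : ℕ} (μ L : ℝ) (f : EuclideanSpace ℝ (Fin n) → ℝ) : Prop :=
  ConvexOn ℝ Set.univ (fun x => f x - μ / 2 * ‖x‖ ^ 2) ∧
  ConvexOn ℝ Set.univ (fun x => L / 2 * ‖x‖ ^ 2 - f x)

section Smooth

variable {E : Type*} [NormedAddCommGroup E] [InnerProductSpace ℝ E]

/-- A convex function lies above each of its tangent hyperplanes. -/
theorem ConvexOn.add_inner_le_of_hasGradientAt [CompleteSpace E] {h : E → ℝ} {g x : E}
    (hc : ConvexOn ℝ Set.univ h) (hg : HasGradientAt h g x) (y : E) :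
    h x + inner ℝ g (y - x) ≤ h y := by
  have hline : HasDerivAt (fun t : ℝ => x + t • (y - x)) (y - x) 0 := by
    simpa using ((hasDerivAt_id (0 : ℝ)).smul_const (y - x)).const_add x
  have hd : HasDerivAt (fun t : ℝ => h (x + t • (y - x))) (inner ℝ g (y - x)) 0 := by
    have hg' : HasFDerivAt h (InnerProductSpace.toDual ℝ E g) (x + (0 : ℝ) • (y - x)) := by
      simpa using hg.hasFDerivAt
    simpa [Function.comp_def] using hg'.comp_hasDerivAt (0 : ℝ) hline
  have hconv : ConvexOn ℝ Set.univ (fun t : ℝ => h (x + t • (y - x))) := by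
    simpa [Function.comp_def, AffineMap.lineMap_apply, add_comm] using
      hc.comp_affineMap (AffineMap.lineMap x y : ℝ →ᵃ[ℝ] E)
  have := hconv.le_slope_of_hasDerivAt (Set.mem_univ 0) (Set.mem_univ 1) one_pos hd
  simp only [slope_def_field, one_smul, add_sub_cancel, zero_smul, add_zero, sub_zero,
    div_one] at this
  linarith

theorem hasGradientAt_half_mul_norm_sq [CompleteSpace E] (c : ℝ) (x : E) :
    HasGradientAt (fun z : E => c / 2 * ‖z‖ ^ 2) (c • x) x := by
  rw [hasGradientAt_iff_hasFDerivAt]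
  refine ((hasStrictFDerivAt_norm_sq x).hasFDerivAt.const_mul (c / 2)).congr_fderiv ?_
  ext v
  simp
  ring

end Smooth

section MemFClass

variable {n : ℕ} {L : ℝ} {f : EuclideanSpace ℝ (Fin n) → ℝ}

theorem MemFClass.lower_bound {μ : ℝ} (hf : MemFClass μ L f) (hdiff : Differentiable ℝ f)
    (x y : EuclideanSpace ℝ (Fin n)) :
    f x + inner ℝ (gradient f x) (y - x) + μ / 2 * ‖y - x‖ ^ 2 ≤ f y := by
  have hg : HasGradientAt (fun z => f z - μ / 2 * ‖z‖ ^ 2) (gradient f x - μ • x) x := by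
    rw [hasGradientAt_iff_hasFDerivAt, map_sub]
    exact (hdiff x).hasGradientAt.hasFDerivAt.sub
      (hasGradientAt_half_mul_norm_sq μ x).hasFDerivAt
  have h := hf.1.add_inner_le_of_hasGradientAt hg y
  have hn := norm_sub_sq_real y x
  simp only [inner_sub_left, inner_sub_right, inner_smul_left, real_inner_self_eq_norm_sq,
    RCLike.conj_to_real, real_inner_comm y x] at h hn ⊢
  rw [hn]
  linarith

theorem MemFClass.upper_bound {μ : ℝ} (hf : MemFClass μ L f) (hdiff : Differentiable ℝ f)
    (x y : EuclideanSpace ℝ (Fin n)) :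
    f y ≤ f x + inner ℝ (gradient f x) (y - x) + L / 2 * ‖y - x‖ ^ 2 := by
  have hg : HasGradientAt (fun z => L / 2 * ‖z‖ ^ 2 - f z) (L • x - gradient f x) x := by
    rw [hasGradientAt_iff_hasFDerivAt, map_sub]
    exact (hasGradientAt_half_mul_norm_sq L x).hasFDerivAt.sub
      (hdiff x).hasGradientAt.hasFDerivAt
  have h := hf.2.add_inner_le_of_hasGradientAt hg y
  have hn := norm_sub_sq_real y x
  simp only [inner_sub_left, inner_sub_right, inner_smul_left, real_inner_self_eq_norm_sq,
    RCLike.conj_to_real, real_inner_comm y x] at h hn ⊢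
  rw [hn]
  linarith

/-- The interpolation inequality of `L`-smooth functions, in trapezoidal form. -/
theorem MemFClass.trapezoid_le_sub (hL : 0 < L) (hf : MemFClass (-L) L f)
    (hdiff : Differentiable ℝ f) (d : ℝ) {x y v : EuclideanSpace ℝ (Fin n)}
    (hxy : y = x - (d / L) • v) :
    d / 2 * ((inner ℝ (gradient f x) v + inner ℝ (gradient f y) v) / L)
      + (‖gradient f x‖ ^ 2 + ‖gradient f y‖ ^ 2
          - 2 * inner ℝ (gradient f x) (gradient f y)) / L / 4
      - d ^ 2 / 4 * (‖v‖ ^ 2 / L) ≤ f x - f y := by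
  set a := gradient f x with ha
  set b := gradient f y with hb
  set z := x - (2 * L)⁻¹ • (a - b + d • v) with hz
  have hlow := hf.lower_bound hdiff y z
  have hup := hf.upper_bound hdiff x z
  have hzx : z - x = -((2 * L)⁻¹ • (a - b + d • v)) := by rw [hz]; abel
  have hzy : z - y = (2 * L)⁻¹ • (d • v - (a - b)) := by
    have : (d / L) • v = (2 * L)⁻¹ • ((2 * d) • v) := by
      rw [smul_smul]; congr 1; field_simp
    rw [hz, hxy, this]
    module
  rw [← hb, hzy] at hlow
  rw [← ha, hzx] at hup
  have h := hlow.trans hup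
  rw [norm_neg, norm_smul, norm_smul, mul_pow, mul_pow, Real.norm_eq_abs, sq_abs] at h
  simp only [← real_inner_self_eq_norm_sq, inner_sub_left, inner_sub_right, inner_add_left,
    inner_add_right, inner_neg_right, real_inner_smul_left, real_inner_smul_right,
    real_inner_comm a b, real_inner_comm a v, real_inner_comm b v] at h ⊢
  rw [← sub_nonneg] at h ⊢
  refine h.trans_eq ?_
  field_simp
  ring

end MemFClass

/-- Combination of the interpolation inequalities along the iterates `1 → 3 → 2` with the
Polyak–Łojasiewicz inequality at each of the three points. -/
theorem le_mul_of_trapezoid_of_PL {κ s F₁ F₂ F₃ G₁ G₂ G₃ c₁₂ c₁₃ c₂₃ : ℝ}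
    (hκ₀ : 0 < κ) (hκ₁ : κ ≤ 1) (hs : s = 3 / (2 * (2 + κ))) (hF₁ : 0 ≤ F₁)
    (h₁₃ : s / 2 * (G₁ + c₁₃) + (G₁ + G₃ - 2 * c₁₃) / 4 - s ^ 2 / 4 * G₁ ≤ F₁ - F₃)
    (h₃₁ : -s / 2 * (G₁ + c₁₃) + (G₁ + G₃ - 2 * c₁₃) / 4 - s ^ 2 / 4 * G₁ ≤ F₃ - F₁)
    (h₃₂ : s / 2 * (c₁₃ + c₁₂) + (G₃ + G₂ - 2 * c₂₃) / 4 - s ^ 2 / 4 * G₁ ≤ F₃ - F₂)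
    (hsq : 0 ≤ G₃ + s ^ 2 * G₁ + (2 / 3) ^ 2 * G₂ - 2 * s * c₁₃ - 2 * (2 / 3) * c₂₃
      + 2 * s * (2 / 3) * c₁₂)
    (hPL₁ : 2 * κ * F₁ ≤ G₁) (hPL₂ : 2 * κ * F₂ ≤ G₂) (hPL₃ : 2 * κ * F₃ ≤ G₃) :
    F₂ ≤ (4 - κ ^ 3 - 3 * κ) / (2 + κ) ^ 2 * F₁ := by
  have hu : 0 < 2 + κ := by linarith
  have hs₀ : 0 < s := by rw [hs]; positivity
  obtain ⟨W₁, hW₁⟩ : ∃ W, W = 2 - κ * (5 * s - 1) / 2 := ⟨_, rfl⟩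
  obtain ⟨W₂, hW₂⟩ : ∃ W, W = 2 + κ * s := ⟨_, rfl⟩
  obtain ⟨M, hM⟩ : ∃ M, M = W₁ * s + W₂ * s * (5 / 2) := ⟨_, rfl⟩
  obtain ⟨Q₁, hQ₁⟩ : ∃ Q, Q = W₁ * s / 2 + M * (1 - s ^ 2) / 4 - W₂ * s ^ 2 * (5 / 8) := ⟨_, rfl⟩
  obtain ⟨Q₂, hQ₂⟩ : ∃ Q, Q = W₂ / 12 := ⟨_, rfl⟩
  obtain ⟨Q₃, hQ₃⟩ : ∃ Q, Q = (M + W₂) / 4 - W₂ * (3 / 8) := ⟨_, rfl⟩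
  have hW₂0 : 0 < W₂ := by rw [hW₂]; positivity
  have hQ₂0 : 0 ≤ Q₂ := by rw [hQ₂]; positivity
  have hκ2 : κ ^ 2 ≤ 1 := by nlinarith
  have hκ3 : κ ^ 3 ≤ 1 := by nlinarith
  have hW₁0 : 0 ≤ W₁ := by
    have : W₁ = (4 - 3 / 4 * κ + κ ^ 2 / 2) / (2 + κ) := by
      rw [hW₁, hs]; field_simp; ring
    rw [this]
    apply div_nonneg _ hu.le
    nlinarith
  have hMW : 0 ≤ M - W₁ := by
    have : M - W₁ = (13 + 19 / 2 * κ + κ ^ 2 / 2 - κ ^ 3 / 2) / (2 + κ) ^ 2 := by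
      rw [hM, hW₁, hW₂, hs]; field_simp; ring
    rw [this]
    apply div_nonneg _ (by positivity)
    nlinarith
  have hQ₁0 : 0 ≤ Q₁ := by
    have : Q₁ = (159 / 16 + 657 / 32 * κ + 477 / 32 * κ ^ 2 + 75 / 16 * κ ^ 3
        + 9 / 16 * κ ^ 4) / (2 + κ) ^ 4 := by
      rw [hQ₁, hM, hW₁, hW₂, hs]; field_simp; ring
    rw [this]
    positivity
  have hQ₃0 : 0 ≤ Q₃ := by
    have : Q₃ = (17 / 4 + 13 / 8 * κ - κ ^ 2 / 4) / (2 + κ) ^ 2 := by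
      rw [hQ₃, hM, hW₁, hW₂, hs]; field_simp; ring
    rw [this]
    apply div_nonneg _ (by positivity)
    nlinarith
  have hF₃ : 2 * κ * Q₃ = W₂ - W₁ := by
    rw [hQ₃, hM, hW₁, hW₂, hs]; field_simp; ring
  have hrate : W₁ - 2 * κ * Q₁
      ≤ (4 - κ ^ 3 - 3 * κ) / (2 + κ) ^ 2 * (W₂ + 2 * κ * Q₂) := by
    have : (4 - κ ^ 3 - 3 * κ) / (2 + κ) ^ 2 * (W₂ + 2 * κ * Q₂) - (W₁ - 2 * κ * Q₁)
        = κ * (1 - κ) * (77 / 24 + 461 / 48 * κ + 49 / 4 * κ ^ 2 + 127 / 24 * κ ^ 3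
          + 7 / 12 * κ ^ 4) / (2 + κ) ^ 4 := by
      rw [hQ₁, hQ₂, hM, hW₁, hW₂, hs]; field_simp; ring
    rw [← sub_nonneg, this]
    have := sub_nonneg.2 hκ₁
    positivity
  have hsum : (W₂ + 2 * κ * Q₂) * F₂ ≤ (W₁ - 2 * κ * Q₁) * F₁ := by
    have e₁ := mul_le_mul_of_nonneg_left h₁₃ (by linarith : 0 ≤ (M + W₁) / 2)
    have e₂ := mul_le_mul_of_nonneg_left h₃₁ (by linarith : 0 ≤ (M - W₁) / 2)
    have e₃ := mul_le_mul_of_nonneg_left h₃₂ hW₂0.le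
    have e₄ := mul_nonneg (by positivity : 0 ≤ W₂ * (3 / 8)) hsq
    have e₅ := mul_le_mul_of_nonneg_left hPL₁ hQ₁0
    have e₆ := mul_le_mul_of_nonneg_left hPL₂ hQ₂0
    have e₇ := mul_le_mul_of_nonneg_left hPL₃ hQ₃0
    have e₈ : 2 * κ * Q₃ * F₃ = (W₂ - W₁) * F₃ := by rw [hF₃]
    have e₉ : Q₁ * G₁ = (W₁ * s / 2 + M * (1 - s ^ 2) / 4 - W₂ * s ^ 2 * (5 / 8)) * G₁ := by
      rw [hQ₁]
    have e₁₀ : Q₂ * G₂ = W₂ / 12 * G₂ := by rw [hQ₂]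
    have e₁₁ : Q₃ * G₃ = ((M + W₂) / 4 - W₂ * (3 / 8)) * G₃ := by rw [hQ₃]
    have e₁₂ : M * c₁₃ = (W₁ * s + W₂ * s * (5 / 2)) * c₁₃ := by rw [hM]
    linarith
  have hpos : 0 < W₂ + 2 * κ * Q₂ := by positivity
  refine le_of_mul_le_mul_left ?_ hpos
  calc (W₂ + 2 * κ * Q₂) * F₂ ≤ (W₁ - 2 * κ * Q₁) * F₁ := hsum
    _ ≤ (4 - κ ^ 3 - 3 * κ) / (2 + κ) ^ 2 * (W₂ + 2 * κ * Q₂) * F₁ := by gcongr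
    _ = (W₂ + 2 * κ * Q₂) * ((4 - κ ^ 3 - 3 * κ) / (2 + κ) ^ 2 * F₁) := by ring

/-- One gradient descent step with the optimally boosted step length `(1 + α⋆)/L`
under the Polyak–Łojasiewicz inequality. -/
theorem gradient_descent_PL_optimal_boost
    (n : ℕ) (hn : 0 < n)
    (L : ℝ) (hL : 0 < L)
    (f : EuclideanSpace ℝ (Fin n) → ℝ)
    (hdiff : Differentiable ℝ f)
    (hsmooth : MemFClass (-L) L f)
    (fstar : ℝ) (hfstar : IsGLB (Set.range f) fstar)
    (x1 : EuclideanSpace ℝ (Fin n))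
    (η : ℝ) (hη0 : 0 < η) (hηL : η ≤ L)
    (hPL : ∀ x, f x ≤ f x1 → f x - fstar ≤ 1 / (2 * η) * ‖gradient f x‖ ^ 2)
    (κ : ℝ) (hκ : κ = η / L)
    (αstar : ℝ) (hαstar : αstar = (1 - κ) / (2 + κ))
    (x2 : EuclideanSpace ℝ (Fin n))
    (hx2 : x2 = x1 - ((1 + αstar) / L) • gradient f x1) :
    f x2 - fstar ≤ (4 - κ ^ 3 - 3 * κ) / (2 + κ) ^ 2 * (f x1 - fstar) := by
  have hκ₀ : 0 < κ := by rw [hκ]; positivity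
  have hκ₁ : κ ≤ 1 := by rw [hκ]; exact (div_le_one hL).2 hηL
  obtain ⟨s, hs⟩ : ∃ s, s = 3 / (2 * (2 + κ)) := ⟨_, rfl⟩
  have hs₀ : 0 < s := by rw [hs]; positivity
  have hs₁ : s ≤ 1 := by rw [hs, div_le_one (by positivity)]; linarith
  have hstep : 1 + αstar = 2 * s := by rw [hαstar, hs]; field_simp; ring
  obtain ⟨x3, hx3⟩ : ∃ x, x = x1 - (s / L) • gradient f x1 := ⟨_, rfl⟩
  have hx23 : x2 = x3 - (s / L) • gradient f x1 := by
    rw [hx2, hx3, hstep]; module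
  have hx31 : x1 = x3 - (-s / L) • gradient f x1 := by
    rw [hx3]; module
  have hdescent : ∀ d : ℝ, 0 ≤ d → d ≤ 2 → f (x1 - (d / L) • gradient f x1) ≤ f x1 := by
    intro d hd0 hd2
    have h := hsmooth.upper_bound hdiff x1 (x1 - (d / L) • gradient f x1)
    rw [sub_sub_cancel_left, norm_neg, norm_smul, mul_pow, inner_neg_right,
      real_inner_smul_right, real_inner_self_eq_norm_sq, Real.norm_eq_abs, sq_abs] at h
    have e : f x1 + -(d / L * ‖gradient f x1‖ ^ 2) + L / 2 * ((d / L) ^ 2 * ‖gradient f x1‖ ^ 2)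
        = f x1 - d * (2 - d) * (‖gradient f x1‖ ^ 2 / (2 * L)) := by
      field_simp; ring
    have : 0 ≤ d * (2 - d) * (‖gradient f x1‖ ^ 2 / (2 * L)) :=
      mul_nonneg (mul_nonneg hd0 (by linarith)) (by positivity)
    linarith
  have hPL' : ∀ x, f x ≤ f x1 → 2 * κ * (f x - fstar) ≤ ‖gradient f x‖ ^ 2 / L := by
    intro x hx
    calc 2 * κ * (f x - fstar) ≤ 2 * κ * (1 / (2 * η) * ‖gradient f x‖ ^ 2) := by
          gcongr; exact hPL x hx
      _ = ‖gradient f x‖ ^ 2 / L := by rw [hκ]; field_simp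
  have h₁₃ := hsmooth.trapezoid_le_sub hL hdiff s hx3
  have h₃₁ := hsmooth.trapezoid_le_sub hL hdiff (-s) hx31
  have h₃₂ := hsmooth.trapezoid_le_sub hL hdiff s hx23
  have hsq : 0 ≤ ‖gradient f x3 - s • gradient f x1 - (2 / 3 : ℝ) • gradient f x2‖ ^ 2 / L := by
    positivity
  have hPL₂ := hPL' x2 (by rw [hx2, hstep]; exact hdescent _ (by linarith) (by linarith))
  have hPL₃ := hPL' x3 (by rw [hx3]; exact hdescent _ hs₀.le (by linarith))
  refine le_mul_of_trapezoid_of_PL (c₁₂ := inner ℝ (gradient f x1) (gradient f x2) / L)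
    (c₁₃ := inner ℝ (gradient f x1) (gradient f x3) / L)
    (c₂₃ := inner ℝ (gradient f x2) (gradient f x3) / L) hκ₀ hκ₁ hs
    (sub_nonneg.2 (hfstar.1 ⟨x1, rfl⟩)) ?_ ?_ ?_ ?_ (hPL' x1 le_rfl) hPL₂ hPL₃
  all_goals
    simp only [← real_inner_self_eq_norm_sq, inner_sub_left, inner_sub_right,
      real_inner_smul_left, real_inner_smul_right,
      real_inner_comm (gradient f x1) (gradient f x3),
      real_inner_comm (gradient f x1) (gradient f x2),
      real_inner_comm (gradient f x2) (gradient f x3)] at *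
  · linear_combination h₁₃
  · linear_combination h₃₁
  · linear_combination h₃₂
  · linear_combination hsq
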